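/- arXiv:1112.4065 — 7 statements merged into one kernel-verified Lean document; each statement's English description precedes it below -/
import Mathlib

section
/- For every τ ∈ ℝ: if |τ| ≤ 1 then ∫₀¹ ln|τ + cos(2πθ)| dθ = −ln 2, and if |τ| ≥ 1 then ∫₀¹ ln|τ + cos(2πθ)| dθ = −ln 2 + ln(|τ| + √(τ² − 1)). -/
/-!
On the unit circle `z = e^{iφ}`, the polynomial `(z² + 2τz + 1) / 2` has modulus `|τ + cos φ|`,
so the integral is its logarithmic Mahler measure. Factor `z² + 2τz + 1 = (z - a) (z - b)`, where
`a * b = 1` and `a + b = -2τ`. Jensen's formula, in the form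
`Polynomial.logMahlerMeasure_X_sub_C`, then gives the value `-log 2 + log⁺ ‖a‖ + log⁺ ‖b‖`
(`integral_log_abs_add_cos`). For `|τ| ≤ 1` both roots lie on the unit circle. For `|τ| ≥ 1` they
are real with absolute values `|τ| ± √(τ² - 1)`, and only the larger one contributes.
-/

open Polynomial in
/-- The two sides agree also where `τ + cos x = 0`. Putting the factor `1 / 2` inside the
polynomial is what avoids the exceptional set on which `log (2 * y) = log 2 + log y` fails. -/
lemma norm_eval_circleMap (τ : ℝ) (a b : ℂ) (hab : a * b = 1) (hs : a + b = -2 * τ) (x : ℝ) :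
    ‖eval (circleMap 0 1 x) (C (1 / 2 : ℂ) * ((X - C a) * (X - C b)))‖ = |τ + Real.cos x| := by
  have hz : Complex.exp (x * Complex.I) * Complex.exp (-x * Complex.I) = 1 := by
    rw [← Complex.exp_add]; simp
  have key : eval (circleMap 0 1 x) (C (1 / 2 : ℂ) * ((X - C a) * (X - C b))) =
      Complex.exp (x * Complex.I) * ((τ + Real.cos x : ℝ) : ℂ) := by
    simp only [circleMap, eval_mul, eval_sub, eval_X, eval_C, Complex.ofReal_add,
      Complex.ofReal_cos, Complex.cos, Complex.ofReal_one, zero_add, one_mul]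
    linear_combination (1 / 2 : ℂ) * hab - (1 / 2 : ℂ) * Complex.exp (x * Complex.I) * hs
      - (1 / 2 : ℂ) * hz
  rw [key, norm_mul, Complex.norm_exp_ofReal_mul_I, one_mul, Complex.norm_real, Real.norm_eq_abs]

open Polynomial in
lemma integral_log_abs_add_cos (τ : ℝ) (a b : ℂ) (hab : a * b = 1) (hs : a + b = -2 * τ) :
    (∫ θ in (0:ℝ)..1, Real.log |τ + Real.cos (2 * Real.pi * θ)|) =
      -Real.log 2 + (Real.posLog ‖a‖ + Real.posLog ‖b‖) := by
  have h1 : (C (1 / 2 : ℂ) * ((X - C a) * (X - C b))).logMahlerMeasure =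
      -Real.log 2 + (Real.posLog ‖a‖ + Real.posLog ‖b‖) := by
    have hne : (X - C a) * (X - C b) ≠ 0 := mul_ne_zero (X_sub_C_ne_zero a) (X_sub_C_ne_zero b)
    rw [logMahlerMeasure_C_mul (by norm_num) hne,
      logMahlerMeasure_mul_eq_add_logMahlerMeasure hne,
      logMahlerMeasure_X_sub_C, logMahlerMeasure_X_sub_C]
    simp
  rw [← h1, logMahlerMeasure_def, Real.circleAverage_def]
  simp only [norm_eval_circleMap τ a b hab hs]
  rw [intervalIntegral.integral_comp_mul_left (fun x => Real.log |τ + Real.cos x|)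
    (by positivity : 2 * Real.pi ≠ 0)]
  simp

/-- The classical integral `∫₀¹ ln |τ + cos 2πθ| dθ`:
it equals `-ln 2` for `|τ| ≤ 1`, and `-ln 2 + ln (|τ| + √(τ² - 1))`
(i.e. `-ln 2 + arccosh |τ|`) for `|τ| ≥ 1`. -/
theorem stmt3 (τ : ℝ) :
    (|τ| ≤ 1 →
      (∫ θ in (0:ℝ)..1, Real.log |τ + Real.cos (2 * Real.pi * θ)|) = -Real.log 2) ∧
    (1 ≤ |τ| →
      (∫ θ in (0:ℝ)..1, Real.log |τ + Real.cos (2 * Real.pi * θ)|) =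
        -Real.log 2 + Real.log (|τ| + Real.sqrt (τ ^ 2 - 1))) := by
  constructor
  · intro h
    obtain ⟨h₁, h₂⟩ := abs_le.mp h
    -- With `τ = cos φ`, the roots are `-e^{±iφ}`.
    obtain ⟨φ, rfl⟩ : ∃ φ, τ = Real.cos φ := ⟨_, (Real.cos_arccos h₁ h₂).symm⟩
    rw [integral_log_abs_add_cos _ (-Complex.exp (φ * Complex.I))
      (-Complex.exp ((-φ : ℝ) * Complex.I))]
    · simp only [norm_neg, Complex.norm_exp_ofReal_mul_I]
      simp
    · rw [neg_mul_neg, ← Complex.exp_add]; simp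
    · rw [Complex.ofReal_cos, Complex.cos]
      push_cast
      ring
  · intro h
    have hsq : 1 ≤ |τ| ^ 2 := by nlinarith
    have hs2 : Real.sqrt (τ ^ 2 - 1) ^ 2 = |τ| ^ 2 - 1 := by
      rw [Real.sq_sqrt (by rw [← sq_abs]; linarith), sq_abs]
    have hs0 := Real.sqrt_nonneg (τ ^ 2 - 1)
    set s := Real.sqrt (τ ^ 2 - 1)
    obtain ⟨ε, hε, hετ⟩ : ∃ ε : ℝ, |ε| = 1 ∧ τ = ε * |τ| := by
      rcases le_total 0 τ with h0 | h0
      · exact ⟨1, by simp, by rw [abs_of_nonneg h0]; ring⟩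
      · exact ⟨-1, by simp, by rw [abs_of_nonpos h0]; ring⟩
    have hε2 : ε ^ 2 = 1 := by rw [← sq_abs, hε]; norm_num
    have hle : s ≤ |τ| := by nlinarith
    have hle1 : |τ| - s ≤ 1 := by nlinarith
    rw [integral_log_abs_add_cos τ ((-ε * (|τ| + s) : ℝ) : ℂ) ((-ε * (|τ| - s) : ℝ) : ℂ)]
    · rw [Complex.norm_real, Complex.norm_real, norm_mul, norm_mul, norm_neg,
        Real.norm_eq_abs, Real.norm_eq_abs, Real.norm_eq_abs, hε, one_mul, one_mul,
        abs_of_nonneg (by linarith : 0 ≤ |τ| + s), abs_of_nonneg (by linarith : 0 ≤ |τ| - s),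
        Real.posLog_eq_log (by rw [abs_of_nonneg (by linarith)]; linarith),
        (Real.posLog_eq_zero_iff _).mpr (by rw [abs_of_nonneg (by linarith)]; exact hle1),
        add_zero]
    · norm_cast
      linear_combination (|τ| ^ 2 - s ^ 2) * hε2 - hs2
    · norm_cast
      push_cast
      linear_combination 2 * hετ
end

section
/- Let μ, λ ∈ ℝ with μ ≠ 0, |λ| ≤ |μ| and |λ| ≤ 2. Then ∫₀¹ ln|μ + λ cos(2πθ)| dθ = 0 if and only if |μ| = 1 + λ²/4. -/
/-!
For `μ > 0` put `B = (μ + √(μ² - λ²)) / 2` and `r = λ / (2B)`, so that `|r| ≤ 1` and, for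
`z = e^{iφ}`, `μ + λ cos φ = B (1 + r² + 2 r cos φ) = B ‖z + r‖²`. The circle average of
`log ‖z + r‖` is `log⁺ |r| = 0`, hence the Lyapunov exponent equals `log B`
(`integral_log_factored`). It vanishes iff `μ + √(μ² - λ²) = 2`, which for `|λ| ≤ 2` is the
equation `μ = 1 + λ²/4`. The case `μ < 0` follows from the symmetry `(μ, λ) ↦ (-μ, -λ)`.
-/

lemma norm_circleMap_add_sq (r φ : ℝ) :
    ‖circleMap 0 1 φ + (r : ℂ)‖ ^ 2 = 1 + r ^ 2 + 2 * r * Real.cos φ := by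
  have hre : (circleMap 0 1 φ + (r : ℂ)).re = Real.cos φ + r := by
    simp [circleMap, Complex.exp_ofReal_mul_I_re]
  have him : (circleMap 0 1 φ + (r : ℂ)).im = Real.sin φ := by
    simp [circleMap, Complex.exp_ofReal_mul_I_im]
  rw [Complex.sq_norm, Complex.normSq_apply, hre, him]
  nlinarith [Real.sin_sq_add_cos_sq φ]

lemma integral_log_norm_circleMap_add {r : ℝ} (hr : |r| ≤ 1) :
    ∫ φ in (0 : ℝ)..2 * Real.pi, Real.log ‖circleMap 0 1 φ + (r : ℂ)‖ = 0 := by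
  have h := circleAverage_log_norm_add_const_eq_posLog (a := (r : ℂ))
  rw [Real.posLog_eq_zero_iff _ |>.mpr (by simpa using hr), Real.circleAverage_def] at h
  simpa [Real.pi_ne_zero] using h

/-- Jensen's formula for the factored form `B ‖z + r‖²` of the linearized dynamics. -/
lemma integral_log_factored {B r : ℝ} (hB : B ≠ 0) (hr : |r| ≤ 1) :
    ∫ θ in (0 : ℝ)..1,
      Real.log |B * (1 + r ^ 2) + 2 * B * r * Real.cos (2 * Real.pi * θ)| = Real.log B := by
  have hpi : (2 * Real.pi) ≠ 0 := by positivity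
  rw [intervalIntegral.integral_comp_mul_left
    (fun φ => Real.log |B * (1 + r ^ 2) + 2 * B * r * Real.cos φ|) hpi]
  -- The splitting of the logarithm fails only where `z = -r`, because `Real.log 0 = 0`.
  have hcount : (circleMap 0 1 ⁻¹' {-(r : ℂ)}).Countable :=
    (Set.countable_singleton _).preimage_circleMap 0 one_ne_zero
  have hcongr : ∫ φ in (0 : ℝ)..2 * Real.pi,
      Real.log |B * (1 + r ^ 2) + 2 * B * r * Real.cos φ| =
      ∫ φ in (0 : ℝ)..2 * Real.pi,
        (Real.log B + 2 * Real.log ‖circleMap 0 1 φ + (r : ℂ)‖) := by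
    apply intervalIntegral.integral_congr_ae
    filter_upwards [hcount.ae_notMem MeasureTheory.volume] with φ hφ _
    have hz : ‖circleMap 0 1 φ + (r : ℂ)‖ ≠ 0 := by
      rw [norm_ne_zero_iff]
      exact fun h => hφ (eq_neg_of_add_eq_zero_left h)
    have hfac : B * (1 + r ^ 2) + 2 * B * r * Real.cos φ =
        B * ‖circleMap 0 1 φ + (r : ℂ)‖ ^ 2 := by
      rw [norm_circleMap_add_sq]; ring
    rw [Real.log_abs, hfac, Real.log_mul hB (pow_ne_zero 2 hz), Real.log_pow]
    norm_num
  have hint : IntervalIntegrable (fun φ => Real.log ‖circleMap 0 1 φ + (r : ℂ)‖)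
      MeasureTheory.volume 0 (2 * Real.pi) := by
    have h := circleIntegrable_log_norm_sub_const (a := -(r : ℂ)) (c := 0) 1
    simpa [CircleIntegrable] using h
  simp only [mul_zero, mul_one]
  rw [hcongr, intervalIntegral.integral_add (by simp) (hint.const_mul 2),
    intervalIntegral.integral_const_mul, integral_log_norm_circleMap_add hr]
  simp only [intervalIntegral.integral_const, smul_eq_mul]
  field_simp
  ring

lemma lyapunov_zero_iff_of_pos {μ lam : ℝ} (hμ : 0 < μ) (h1 : |lam| ≤ μ) (h2 : |lam| ≤ 2) :
    (∫ θ in (0 : ℝ)..1, Real.log |μ + lam * Real.cos (2 * Real.pi * θ)|) = 0 ↔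
      μ = 1 + lam ^ 2 / 4 := by
  have hsq : lam ^ 2 ≤ μ ^ 2 := sq_le_sq.mpr (by rwa [abs_of_pos hμ])
  have hlam : lam ^ 2 ≤ 4 := by nlinarith [sq_abs lam, abs_nonneg lam]
  obtain ⟨s, hs⟩ : ∃ s, s = √(μ ^ 2 - lam ^ 2) := ⟨_, rfl⟩
  have hs0 : 0 ≤ s := hs ▸ Real.sqrt_nonneg _
  have hss : s ^ 2 = μ ^ 2 - lam ^ 2 := by rw [hs, Real.sq_sqrt (by linarith)]
  obtain ⟨B, hB⟩ : ∃ B, B = (μ + s) / 2 := ⟨_, rfl⟩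
  have hBpos : 0 < B := by rw [hB]; linarith
  have hr : |lam / (2 * B)| ≤ 1 := by
    rw [abs_div, abs_of_pos (by positivity : 0 < 2 * B), div_le_one (by positivity)]
    linarith
  have hcoef : B * (1 + (lam / (2 * B)) ^ 2) = μ := by
    have hquad : 4 * B ^ 2 + lam ^ 2 = 4 * B * μ := by
      rw [hB]; linear_combination hss
    field_simp
    linear_combination hquad
  have hcoef' : 2 * B * (lam / (2 * B)) = lam := by field_simp
  have hint := integral_log_factored hBpos.ne' hr
  rw [hcoef, hcoef'] at hint
  rw [hint]
  constructor
  · intro h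
    have hB1 : B = 1 := Real.eq_one_of_pos_of_log_eq_zero hBpos h
    have hs2 : s = 2 - μ := by linarith
    rw [hs2] at hss
    linarith
  · intro h
    have hs2 : s = 1 - lam ^ 2 / 4 := by
      rw [← sq_eq_sq₀ hs0 (by linarith), hss, h]; ring
    rw [hB, hs2, h]
    ring_nf
    exact Real.log_one


/-- In the reducibility region `|λ| ≤ |μ|` (with `μ ≠ 0`, `|λ| ≤ 2`),
the Lyapunov exponent `∫₀¹ ln |μ + λ cos 2πθ| dθ` of the trivial invariant set of the
model map vanishes exactly on the parabolas `|μ| = 1 + λ²/4`. -/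
theorem stmt5 (μ lam : ℝ) (hμ : μ ≠ 0) (h1 : |lam| ≤ |μ|) (h2 : |lam| ≤ 2) :
    (∫ θ in (0:ℝ)..1, Real.log |μ + lam * Real.cos (2 * Real.pi * θ)|) = 0 ↔
      |μ| = 1 + lam ^ 2 / 4 := by
  rcases lt_or_gt_of_ne hμ with hneg | hpos
  · rw [abs_of_neg hneg] at h1 ⊢
    rw [← abs_neg lam] at h1 h2
    have h := lyapunov_zero_iff_of_pos (neg_pos.mpr hneg) h1 h2
    have habs : ∀ θ : ℝ, |-μ + -lam * Real.cos (2 * Real.pi * θ)| =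
        |μ + lam * Real.cos (2 * Real.pi * θ)| := fun θ => by
      rw [← abs_neg]; congr 1; ring
    simpa only [habs, neg_sq] using h
  · rw [abs_of_pos hpos] at h1 ⊢
    exact lyapunov_zero_iff_of_pos hpos h1 h2
end

section
/- Let ω ∈ ℝ be Diophantine and let μ, λ ∈ ℝ with 0 < |λ| < |μ|. Then the linear skew product (θ,x) ↦ (θ+ω, a(θ)x) with a(θ) = −(μ + λ cos(2πθ)) is reducible with multiplier b = −(μ + sign(μ)·√(μ² − λ²))/2; that is, there exists a continuous nonvanishing function c : ℝ/ℤ → ℝ such that c(θ+ω)·b = a(θ)·c(θ) for all θ ∈ ℝ/ℤ, where b = −(μ + sign(μ)·√(μ² − λ²))/2. -/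
/-!
Put `B = (μ + sign μ √(μ² - λ²)) / 2` and `r = λ / (2B)`. Since `B² - μB + λ²/4 = 0`, the
factorization `μ + λ cos φ = B (1 + 2r cos φ + r²) = B ‖1 + r e^{iφ}‖²` holds, and `|r| < 1`.
So it is enough to solve the cohomological equation `h(θ + ω) - h(θ) = log (1 + r e^{2πiθ})`
with `h` continuous and `1`-periodic (`exists_cohomological_solution`):
then `c = ‖exp h‖²` conjugates the skew product to the constant one.

The equation is solved by Fourier series, dividing the `n`-th Taylor coefficient of
`log (1 + r z)` by `e^{2πinω} - 1`. The Diophantine condition bounds these divisors below by a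
power of `n` (`small_divisor_bound`), which the geometric decay `|r|^n` absorbs.
-/

open Complex in
/-- The small divisor `e^{2πinω} - 1` is at least four times the distance from `nω` to `ℤ`,
hence at least `4 C n^{-τ}`. -/
lemma small_divisor_bound {ω C τ : ℝ}
    (h : ∀ p q : ℤ, q ≠ 0 → C * |(q : ℝ)| ^ (-τ) ≤ |(q : ℝ) * ω - (p : ℝ)|)
    (n : ℕ) (hn : n ≠ 0) :
    4 * (C * (n : ℝ) ^ (-τ)) ≤ ‖cexp (2 * Real.pi * ω * I) ^ n - 1‖ := by
  have h1 := h (round ((n : ℝ) * ω)) n (by exact_mod_cast hn)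
  set p := round ((n : ℝ) * ω) with hp
  have hx : |(n : ℝ) * ω - p| ≤ 1 / 2 := abs_sub_round _
  simp only [Int.cast_natCast, Nat.abs_cast] at h1
  set x : ℝ := (n : ℝ) * ω - p with hxdef
  have e1 : cexp (2 * Real.pi * ω * I) ^ n = cexp (I * ((2 * Real.pi * x : ℝ) : ℂ)) := by
    rw [← Complex.exp_nat_mul, Complex.exp_eq_exp_iff_exists_int]
    refine ⟨p, ?_⟩
    rw [hxdef]; push_cast; ring
  have hpi := Real.pi_pos
  have e2 : |Real.pi * x| ≤ Real.pi / 2 := by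
    rw [abs_mul, abs_of_pos hpi]; nlinarith
  have e3 := Real.mul_abs_le_abs_sin e2
  rw [e1, Complex.norm_exp_I_mul_ofReal_sub_one, Real.norm_eq_abs, abs_mul, abs_two,
    show 2 * Real.pi * x / 2 = Real.pi * x by ring]
  rw [abs_mul, abs_of_pos hpi, ← mul_assoc, div_mul_cancel₀ _ hpi.ne'] at e3
  linarith

open Complex in
/-- Solution of the cohomological equation for `log (1 + r e^{2πiθ})` over a Diophantine
rotation. -/
lemma exists_cohomological_solution {ω C τ r : ℝ} (hC : 0 < C)
    (h : ∀ p q : ℤ, q ≠ 0 → C * |(q : ℝ)| ^ (-τ) ≤ |(q : ℝ) * ω - (p : ℝ)|)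
    (hr : |r| < 1) :
    ∃ f : ℝ → ℂ, Continuous f ∧ Function.Periodic f 1 ∧
      ∀ θ : ℝ, f (θ + ω) = f θ + log (1 + r * cexp (2 * Real.pi * θ * I)) := by
  obtain ⟨w, hw⟩ : ∃ w, w = cexp (2 * Real.pi * ω * I) := ⟨_, rfl⟩
  have hnorm : ∀ θ : ℝ, ‖cexp (2 * Real.pi * θ * I)‖ = 1 := fun θ => by
    simpa using Complex.norm_exp_ofReal_mul_I (2 * Real.pi * θ)
  have hpos : ∀ n : ℕ, n ≠ 0 → 0 < C * (n : ℝ) ^ (-τ) := fun n hn => by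
    have : (0 : ℝ) < n := by exact_mod_cast Nat.pos_of_ne_zero hn
    positivity
  have hne : ∀ n : ℕ, n ≠ 0 → w ^ n - 1 ≠ 0 := fun n hn => by
    have h1 := small_divisor_bound h n hn
    rw [← hw] at h1
    have h2 := hpos n hn
    exact norm_pos_iff.1 (by linarith)
  -- The coefficient at `n = 0` is `0`, because division by zero gives zero.
  obtain ⟨a, hdef⟩ : ∃ a : ℕ → ℂ, ∀ n, a n = (-1) ^ (n + 1) * (r : ℂ) ^ n / n / (w ^ n - 1) :=
    ⟨_, fun _ => rfl⟩
  have ha : ∀ n : ℕ, ‖a n‖ ≤ (4 * C)⁻¹ * ((n : ℝ) ^ ⌈τ⌉₊ * |r| ^ n) := by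
    intro n
    rcases eq_or_ne n 0 with rfl | hn
    · simp only [hdef, Nat.cast_zero, div_zero, zero_div, norm_zero]
      positivity
    have h1 := small_divisor_bound h n hn
    rw [← hw] at h1
    have h2 := hpos n hn
    have hn1 : (1 : ℝ) ≤ n := by exact_mod_cast Nat.one_le_iff_ne_zero.2 hn
    have hn0 : (0 : ℝ) < n := by linarith
    have h3 : (n : ℝ) ^ τ ≤ (n : ℝ) ^ ⌈τ⌉₊ := by
      rw [← Real.rpow_natCast]
      exact Real.rpow_le_rpow_of_exponent_le hn1 (Nat.le_ceil τ)
    have e : ‖a n‖ = |r| ^ n / n / ‖w ^ n - 1‖ := by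
      simp [hdef]
    rw [e]
    calc |r| ^ n / n / ‖w ^ n - 1‖ ≤ |r| ^ n / 1 / (4 * (C * (n : ℝ) ^ (-τ))) := by
          gcongr
      _ = (4 * C)⁻¹ * ((n : ℝ) ^ τ * |r| ^ n) := by
          rw [Real.rpow_neg hn0.le]
          have := Real.rpow_pos_of_pos hn0 τ
          field_simp
      _ ≤ _ := by gcongr
  have hsum : Summable fun n : ℕ => (4 * C)⁻¹ * ((n : ℝ) ^ ⌈τ⌉₊ * |r| ^ n) := by
    have hr' : ‖|r|‖ < 1 := by rwa [Real.norm_eq_abs, abs_abs]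
    have hgeom := summable_pow_mul_geometric_of_norm_lt_one ⌈τ⌉₊ hr'
    exact hgeom.mul_left ((4 * C)⁻¹)
  have hb : ∀ (n : ℕ) (θ : ℝ), ‖a n * cexp (2 * Real.pi * θ * I) ^ n‖ ≤
      (4 * C)⁻¹ * ((n : ℝ) ^ ⌈τ⌉₊ * |r| ^ n) := fun n θ => by
    rw [norm_mul, norm_pow, hnorm, one_pow, mul_one]; exact ha n
  have hs : ∀ θ : ℝ, Summable fun n => a n * cexp (2 * Real.pi * θ * I) ^ n :=
    fun θ => Summable.of_norm_bounded hsum fun n => hb n θ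
  refine ⟨fun θ => ∑' n, a n * cexp (2 * Real.pi * θ * I) ^ n, ?_, ?_, ?_⟩
  · exact continuous_tsum (fun n => by fun_prop) hsum hb
  · intro θ
    have : cexp (2 * Real.pi * (θ + 1 : ℝ) * I) = cexp (2 * Real.pi * θ * I) := by
      rw [Complex.exp_eq_exp_iff_exists_int]
      exact ⟨1, by push_cast; ring⟩
    simp only [this]
  · intro θ
    have hz : ‖(r : ℂ) * cexp (2 * Real.pi * θ * I)‖ < 1 := by
      rw [norm_mul, hnorm, mul_one, Complex.norm_real]; exact hr
    have h1 := (hs θ).hasSum.add (hasSum_taylorSeries_log hz)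
    refine HasSum.tsum_eq ?_
    convert h1 using 2 with n
    have e : cexp (2 * Real.pi * (θ + ω : ℝ) * I) = cexp (2 * Real.pi * θ * I) * w := by
      rw [hw, ← Complex.exp_add]; congr 1; push_cast; ring
    rw [e]
    rcases eq_or_ne n 0 with rfl | hn
    · simp [hdef]
    have := hne n hn
    have hn' : (n : ℂ) ≠ 0 := by exact_mod_cast hn
    simp only [hdef, mul_pow]
    field_simp
    ring

/-- For a Diophantine rotation `ω` and `0 < |λ| < |μ|`, the linear
skew product `(θ,x) ↦ (θ+ω, a(θ)x)` with `a(θ) = -(μ + λ cos 2πθ)` (the linearization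
of the model map around its trivial invariant set) is reducible with multiplier
`b = -(μ + sign(μ)·√(μ² - λ²))/2`: there is a continuous, `1`-periodic, nonvanishing
`c : ℝ → ℝ` (modelling `c : ℝ/ℤ → ℝ`) with `c(θ+ω)·b = a(θ)·c(θ)` for all `θ`. -/
theorem stmt6 (ω : ℝ)
    (hdio : ∃ C : ℝ, 0 < C ∧ ∃ τ : ℝ, 0 < τ ∧ ∀ p q : ℤ, q ≠ 0 →
      C * |(q : ℝ)| ^ (-τ) ≤ |(q : ℝ) * ω - (p : ℝ)|)
    (μ lam : ℝ) (h0 : 0 < |lam|) (h1 : |lam| < |μ|) :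
    ∃ c : ℝ → ℝ, Continuous c ∧ Function.Periodic c 1 ∧ (∀ θ, c θ ≠ 0) ∧
      ∀ θ, c (θ + ω) * (-((μ + Real.sign μ * Real.sqrt (μ ^ 2 - lam ^ 2)) / 2)) =
        (-(μ + lam * Real.cos (2 * Real.pi * θ))) * c θ := by
  obtain ⟨C, hC, τ, -, h⟩ := hdio
  have hsq : 0 ≤ μ ^ 2 - lam ^ 2 := by
    have := sq_lt_sq.2 h1
    linarith
  set s := Real.sqrt (μ ^ 2 - lam ^ 2) with hs
  have hs0 : 0 ≤ s := Real.sqrt_nonneg _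
  have hs2 : s ^ 2 = μ ^ 2 - lam ^ 2 := Real.sq_sqrt hsq
  set B := (μ + Real.sign μ * s) / 2 with hB
  have hμ : μ ≠ 0 := abs_pos.1 (h0.trans h1)
  have hBabs : |μ| ≤ |2 * B| ∧ B ^ 2 - μ * B + lam ^ 2 / 4 = 0 := by
    rcases lt_or_gt_of_ne hμ with hlt | hgt
    · rw [hB, Real.sign_of_neg hlt]
      refine ⟨?_, by linarith⟩
      rw [abs_of_neg hlt, abs_of_neg (by linarith)]; linarith
    · rw [hB, Real.sign_of_pos hgt]
      refine ⟨?_, by linarith⟩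
      rw [abs_of_pos hgt, abs_of_pos (by linarith)]; linarith
  obtain ⟨hB1, hB2⟩ := hBabs
  have hB3 : 0 < |2 * B| := by linarith
  have hB0 : B ≠ 0 := by
    rintro h
    simp [h] at hB3
  have hr : |lam / (2 * B)| < 1 := by
    rw [abs_div, div_lt_one hB3]; linarith
  obtain ⟨f, hf, hper, heq⟩ := exists_cohomological_solution hC h hr
  refine ⟨fun θ => ‖Complex.exp (f θ)‖ ^ 2, by fun_prop, fun θ => ?_, fun θ => ?_, fun θ => ?_⟩
  · simp only [hper θ]
  · simp
  set r := lam / (2 * B) with hrdef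
  have hz : ‖(r : ℂ) * Complex.exp (2 * Real.pi * θ * Complex.I)‖ < 1 := by
    have : ‖Complex.exp (2 * Real.pi * θ * Complex.I)‖ = 1 := by
      simpa using Complex.norm_exp_ofReal_mul_I (2 * Real.pi * θ)
    rw [norm_mul, this, mul_one, Complex.norm_real]; exact hr
  have hz0 : 1 + (r : ℂ) * Complex.exp (2 * Real.pi * θ * Complex.I) ≠ 0 := by
    intro h
    rw [← neg_eq_iff_add_eq_zero] at h
    rw [← h] at hz
    simp at hz
  have hfac : ‖1 + (r : ℂ) * Complex.exp (2 * Real.pi * θ * Complex.I)‖ ^ 2 =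
      1 + 2 * r * Real.cos (2 * Real.pi * θ) + r ^ 2 := by
    have e : Complex.exp (2 * Real.pi * θ * Complex.I) =
        ⟨Real.cos (2 * Real.pi * θ), Real.sin (2 * Real.pi * θ)⟩ := by
      apply Complex.ext
      · simpa using Complex.exp_ofReal_mul_I_re (2 * Real.pi * θ)
      · simpa using Complex.exp_ofReal_mul_I_im (2 * Real.pi * θ)
    rw [e, ← Complex.normSq_eq_norm_sq, Complex.normSq_apply]
    simp
    linear_combination r ^ 2 * Real.sin_sq_add_cos_sq (2 * Real.pi * θ)
  have hr1 : 2 * r * B = lam := by rw [hrdef]; field_simp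
  have hr2 : (1 + r ^ 2) * B = μ := by
    rw [hrdef]; field_simp; linarith
  simp only [heq θ, Complex.exp_add, Complex.exp_log hz0, norm_mul, mul_pow, hfac]
  linear_combination (-‖Complex.exp (f θ)‖ ^ 2) * (hr2 + Real.cos (2 * Real.pi * θ) * hr1)
end

section
/- Let α > 0, |ε| < 1 and α(1 + |ε|) < 4, and let F be the FLM. Let P₀ = {(θ,x) ∈ (ℝ/ℤ)×ℝ : x = 1/2} and, for k ≥ 1, let P₋ₖ = {p ∈ (ℝ/ℤ)×ℝ : F^k(p) ∈ P₀} be the k-th pre-critical set. For a sign sequence s = (s₁,…,s_k) ∈ {+,−}^k define the sets P(s) recursively by P(∅) = P₀ and P(s₁,…,s_j,σ) = H_σ(P(s₁,…,s_j) ∩ S₁) for σ ∈ {+,−} (so points of P(s₁,…,s_j) outside S₁ contribute nothing). Then for every k ≥ 1, P₋ₖ = ⋃_{s ∈ {+,−}^k} P(s). -/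
/-!
A point `p` with `F^k(p) ∈ P₀` has its second coordinate in `[0,1]`: since `α(1 + ε cos 2πθ) > 0`,
`f(θ,x) ≥ 0` forces `x ∈ [0,1]`, so this pulls back along the orbit (`flm_mem_Icc_of_iterate`).
Hence for `k ≥ 1` the point `F(p)`, which always lies on or below the post-critical curve, is in
`S₁`. On `S₁` the points `H₊(q)`, `H₋(q)` are exactly the solutions of the quadratic equation
`F(p) = q` (`flmF_flmH`, `exists_flmH_flmF`), so `P₋₍ₖ₊₁₎ = F⁻¹(P₋ₖ)` is
`H₊(P₋ₖ ∩ S₁) ∪ H₋(P₋ₖ ∩ S₁)`, and the claim follows by induction on `k`, starting from `k = 0`.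
-/


/-- The forced logistic map `F(θ,x) = (θ+ω, α x (1-x)(1 + ε cos 2πθ))`,
with the circle `ℝ/ℤ` modelled by `ℝ`. -/
noncomputable def flmF (α ε ω : ℝ) (p : ℝ × ℝ) : ℝ × ℝ :=
  (p.1 + ω, α * p.2 * (1 - p.2) * (1 + ε * Real.cos (2 * Real.pi * p.1)))

/-- The set `S₁` of points of the cylinder `ℝ × [0,1]` lying on or below the
post-critical set `P₁ = {x = (α/4)(1 + ε cos(2π(θ-ω)))}`. -/
def flmS1 (α ε ω : ℝ) : Set (ℝ × ℝ) :=
  {p : ℝ × ℝ | p.2 ∈ Set.Icc (0:ℝ) 1 ∧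
    p.2 ≤ α / 4 * (1 + ε * Real.cos (2 * Real.pi * (p.1 - ω)))}

/-- The two inverse branches of the forced logistic map on `S₁`:
`flmH α ε ω true = H₊` (lower branch, with `-√`), `flmH α ε ω false = H₋`
(upper branch, with `+√`). -/
noncomputable def flmH (α ε ω : ℝ) (σ : Bool) (p : ℝ × ℝ) : ℝ × ℝ :=
  (p.1 - ω,
    1 / 2 + (if σ then (-1 : ℝ) else 1) *
      Real.sqrt (1 / 4 - p.2 / (α * (1 + ε * Real.cos (2 * Real.pi * (p.1 - ω))))))

/-- The sets `P(s)` indexed by finite sign sequences `s ∈ {+,-}^k` (encoded as lists of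
booleans, `true = +`, the outermost applied branch first in the list):
`P(∅) = P₀ = {x = 1/2}` (the critical set) and `P(σ, s) = H_σ (P(s) ∩ S₁)`,
points of `P(s)` outside `S₁` contributing nothing. -/
noncomputable def flmP (α ε ω : ℝ) : List Bool → Set (ℝ × ℝ)
  | [] => {p : ℝ × ℝ | p.2 = 1 / 2}
  | σ :: s => flmH α ε ω σ '' (flmP α ε ω s ∩ flmS1 α ε ω)

theorem flm_factor_pos {ε : ℝ} (hε : |ε| < 1) (t : ℝ) : 0 < 1 + ε * Real.cos t := by
  have h : |ε * Real.cos t| < 1 := by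
    rw [abs_mul]
    exact (mul_le_of_le_one_right (abs_nonneg ε) (Real.abs_cos_le_one t)).trans_lt hε
  linarith [(abs_lt.mp h).1]

theorem flm_mem_Icc_of_iterate {α ε ω : ℝ} (hα : 0 < α) (hε : |ε| < 1) (k : ℕ) :
    ∀ p : ℝ × ℝ, ((flmF α ε ω)^[k] p).2 = 1 / 2 → p.2 ∈ Set.Icc (0 : ℝ) 1 := by
  induction k with
  | zero =>
    intro p hp
    simp only [Function.iterate_zero, id] at hp
    rw [hp]
    norm_num
  | succ k ih =>
    intro p hp
    rw [Function.iterate_succ_apply] at hp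
    have h0 : 0 ≤ α * p.2 * (1 - p.2) * (1 + ε * Real.cos (2 * Real.pi * p.1)) := (ih _ hp).1
    have h1 := nonneg_of_mul_nonneg_left h0 (flm_factor_pos hε _)
    rw [mul_assoc] at h1
    have h2 := nonneg_of_mul_nonneg_right h1 hα
    constructor <;> nlinarith

theorem flmF_flmH {α ε ω : ℝ} (hα : 0 < α) (hε : |ε| < 1) (σ : Bool) {q : ℝ × ℝ}
    (hq : q ∈ flmS1 α ε ω) : flmF α ε ω (flmH α ε ω σ q) = q := by
  obtain ⟨θ, y⟩ := q
  have hle := hq.2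
  simp only at hle
  have hc := flm_factor_pos hε (2 * Real.pi * (θ - ω))
  simp only [flmF, flmH, sub_add_cancel, Prod.mk.injEq, true_and]
  set c := 1 + ε * Real.cos (2 * Real.pi * (θ - ω)) with hcdef
  have hac : 0 < α * c := mul_pos hα hc
  have hr : 0 ≤ 1 / 4 - y / (α * c) := by
    rw [sub_nonneg, div_le_iff₀ hac]
    linarith
  have hs := Real.sq_sqrt hr
  set r := Real.sqrt (1 / 4 - y / (α * c))
  have hy : α * c * (1 / 4 - r ^ 2) = y := by
    rw [hs]
    field_simp
    ring
  rw [← hy]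
  cases σ <;> simp only [if_true, if_false, Bool.false_eq_true] <;> ring

theorem exists_flmH_flmF {α ε : ℝ} (ω : ℝ) (hα : 0 < α) (hε : |ε| < 1) (p : ℝ × ℝ) :
    ∃ σ : Bool, flmH α ε ω σ (flmF α ε ω p) = p := by
  obtain ⟨θ, x⟩ := p
  have hc := flm_factor_pos hε (2 * Real.pi * θ)
  simp only [flmF, flmH, add_sub_cancel_right, Prod.mk.injEq, true_and]
  set c := 1 + ε * Real.cos (2 * Real.pi * θ) with hcdef
  have hr : 1 / 4 - α * x * (1 - x) * c / (α * c) = (x - 1 / 2) ^ 2 := by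
    field_simp
    ring
  rw [hr, Real.sqrt_sq_eq_abs]
  rcases le_total x (1 / 2) with h | h
  · refine ⟨true, ?_⟩
    rw [abs_of_nonpos (by linarith)]
    simp
  · refine ⟨false, ?_⟩
    rw [abs_of_nonneg (by linarith)]
    simp

theorem flm_iterate_iff {α ε ω : ℝ} (hα : 0 < α) (hε : |ε| < 1) (k : ℕ) :
    ∀ p : ℝ × ℝ, ((flmF α ε ω)^[k] p).2 = 1 / 2 ↔
      ∃ s : List Bool, s.length = k ∧ p ∈ flmP α ε ω s := by
  induction k with
  | zero =>
    intro p
    simp [flmP]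
  | succ k ih =>
    intro p
    rw [Function.iterate_succ_apply]
    constructor
    · intro hp
      obtain ⟨s, hs, hps⟩ := (ih _).mp hp
      obtain ⟨σ, hσ⟩ := exists_flmH_flmF ω hα hε p
      refine ⟨σ :: s, by simp [hs], flmF α ε ω p, ⟨hps, ?_, ?_⟩, hσ⟩
      · exact flm_mem_Icc_of_iterate hα hε k _ hp
      -- `F(p)` is below the post-critical curve because `x (1 - x) ≤ 1 / 4`.
      · simp only [flmF, add_sub_cancel_right]
        refine mul_le_mul_of_nonneg_right ?_ (flm_factor_pos hε _).le
        nlinarith [mul_nonneg hα.le (sq_nonneg (p.2 - 1 / 2))]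
    · rintro ⟨s, hs, hps⟩
      cases s with
      | nil => simp at hs
      | cons σ s =>
        obtain ⟨q, ⟨hqs, hq⟩, rfl⟩ := hps
        rw [flmF_flmH hα hε σ hq]
        exact (ih q).mpr ⟨s, by simpa using hs, hqs⟩

/-- For the forced logistic map with `α > 0`, `|ε| < 1`,
`α(1+|ε|) < 4`, the `k`-th pre-critical set `P₋ₖ = {p : F^k(p) ∈ P₀}` is the union of
the sets `P(s)` over all sign sequences `s ∈ {+,-}^k`. -/
theorem stmt11 (α ε ω : ℝ) (hα : 0 < α) (hε : |ε| < 1) (hbound : α * (1 + |ε|) < 4)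
    (k : ℕ) (hk : 1 ≤ k) :
    {p : ℝ × ℝ | (flmF α ε ω)^[k] p ∈ {q : ℝ × ℝ | q.2 = 1 / 2}} =
      ⋃ s ∈ {l : List Bool | l.length = k}, flmP α ε ω s := by
  ext p
  simpa only [Set.mem_ofPred_eq, Set.mem_iUnion, exists_prop] using flm_iterate_iff hα hε k p
end

section
/- Let α > 0, |ε| ≤ 1 and 1 − 2/α ≤ |ε|. Then every invariant curve u : ℝ/ℤ → ℝ of the FLM satisfies u(θ) ≤ 1/2 for some θ ∈ ℝ/ℤ. (Hence |ε| < 1 − 2/α is a necessary condition for the existence of an invariant curve lying strictly above the critical set {x = 1/2}; in particular, for α > 2 it is necessary for the reducibility of the invariant curve x_{α,ε} continuing x_{α,0} ≡ 1 − 1/α.) -/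
/-!
An invariant curve lies on or below the post-critical set `P₁`, because `x (1 - x) ≤ 1/4` and the
forcing factor is nonnegative for `|ε| ≤ 1`. The lowest point of `P₁` has height
`(α / 4) * (1 - |ε|)`, which the hypothesis `1 - 2/α ≤ |ε|` bounds by `1/2`.
-/

/-- For the forced logistic map with `α > 0`, `|ε| ≤ 1` and
`1 - 2/α ≤ |ε|` (so the critical set `{x = 1/2}` and the post-critical set `P₁`
intersect), every invariant curve `u` (continuous and `1`-periodic, modelling a curve
on `ℝ/ℤ`) satisfies `u(θ) ≤ 1/2` for some `θ`.  Hence `|ε| < 1 - 2/α` is a necessary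
condition for the existence of an invariant curve lying strictly above the
critical set. -/
theorem stmt13 (α ε ω : ℝ) (hα : 0 < α) (hε : |ε| ≤ 1) (hc : 1 - 2 / α ≤ |ε|)
    (u : ℝ → ℝ) (hu : Continuous u) (huper : Function.Periodic u 1)
    (hinv : ∀ θ, u (θ + ω) =
      α * u θ * (1 - u θ) * (1 + ε * Real.cos (2 * Real.pi * θ))) :
    ∃ θ, u θ ≤ 1 / 2 := by
  -- The forcing factor `1 + ε cos (2πθ)` attains its minimum `1 - |ε|` at `θ = 0` or `θ = 1/2`.
  obtain ⟨θ, hθ⟩ : ∃ θ : ℝ, ε * Real.cos (2 * Real.pi * θ) = -|ε| := by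
    rcases le_total 0 ε with h | h
    · refine ⟨1 / 2, ?_⟩
      rw [show 2 * Real.pi * (1 / 2) = Real.pi by ring, Real.cos_pi, abs_of_nonneg h]
      ring
    · refine ⟨0, ?_⟩
      rw [mul_zero, Real.cos_zero, abs_of_nonpos h]
      ring
  -- There `P₁` has height `(α / 4) * (1 - |ε|) ≤ 1/2`, and the curve lies on or below `P₁`.
  refine ⟨θ + ω, ?_⟩
  rw [hinv θ, hθ]
  have h1 : α * (1 - |ε|) ≤ 2 := by
    have h : 1 - |ε| ≤ 2 / α := by linarith
    rw [le_div_iff₀ hα] at h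
    linarith
  have h0 : 0 ≤ α * (1 - |ε|) := mul_nonneg hα.le (by linarith)
  have hq : u θ * (1 - u θ) ≤ 1 / 4 := by nlinarith [sq_nonneg (u θ - 1 / 2)]
  calc α * u θ * (1 - u θ) * (1 + -|ε|)
      = (α * (1 - |ε|)) * (u θ * (1 - u θ)) := by ring
    _ ≤ (α * (1 - |ε|)) * (1 / 4) := mul_le_mul_of_nonneg_left hq h0
    _ ≤ 1 / 2 := by linarith
end

section
/- Let ω ∈ ℝ∖ℚ and let μ, λ ∈ ℝ satisfy 0 < |λ| < μ and 1 + λ²/2 < μ < 3/2 − 2|λ|. Then the model map G(θ,x) = (θ + ω, x(x² − (μ + λ cos(2πθ)))) has a two-periodic continuous non-trivial invariant curve: there exists a continuous function u : ℝ/ℤ → ℝ, not identically zero, such that u(θ+ω) = −u(θ)(u(θ)² − (μ + λ cos(2πθ))) for all θ ∈ ℝ/ℤ; consequently the graphs of u and −u form a set invariant under G² but not under G. -/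
/-!
Write `a θ = μ + λ cos (2πθ)`. A solution of `u(θ+ω) = u(θ) (a(θ) - u(θ)²)` is sought with `u > 0`.

* *Upper barrier.* Put `A = μ + |λ|` and `X = √(A - 1)`. The inequality `μ < 3/2 - 2|λ|` says exactly
  that `3 X² < μ - |λ| ≤ a θ`; hence every fibre map `x ↦ x (a θ - x²)` is increasing on `[0, X]`
  and maps this interval into itself.
* *Lower barrier* (`exists_subcocycle`). With `t = (λ/μ) cos (2πθ)` one has
  `exp (t - t²) ≤ 1 + t`, so `log a` is bounded below by the trigonometric polynomial
  `log μ + t - t²`, whose mean `log μ - λ²/(2μ²)` is positive because `μ > 1 + λ²/2`. Since `ω` is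
  irrational, the cohomological equation for its non-constant part is solved explicitly by a
  continuous `ψ`, and `v = ε exp ψ` satisfies `v(θ+ω) ≤ v(θ) (a(θ) - v(θ)²)` for small `ε`.
* *Contraction* (`exists_invariant_curve`). In the coordinate `y = log x` the fibre map is
  `y ↦ y + log (a θ - exp (2y))`, with derivative `1 - 2x²/(a θ - x²)`. Between the barriers this
  derivative lies in `[0, κ]` for some constant `κ < 1`, so the graph transform is a contraction of
  the bounded continuous functions. Its fixed point gives `u`; periodicity follows from uniqueness.
-/

open Real

/-- Lower bound for `log (1 + t)` by a quadratic polynomial, in exponential form. -/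
lemma exp_sub_sq_le {t : ℝ} (ht : |t| ≤ 1 / 4) : exp (t - t ^ 2) ≤ 1 + t := by
  obtain ⟨h1, h2⟩ := abs_le.1 ht
  have hs : |t - t ^ 2| ≤ 1 := by
    rw [abs_le]; constructor <;> nlinarith
  have hb := Real.exp_bound hs (n := 3) (by norm_num)
  simp only [Finset.sum_range_succ, Finset.sum_range_zero, Nat.factorial] at hb
  norm_num at hb
  have hb2 := (abs_le.1 hb).2
  have h3 : |t - t ^ 2| ≤ |t| * (5 / 4) := by
    rw [show t - t ^ 2 = t * (1 - t) by ring, abs_mul]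
    exact mul_le_mul_of_nonneg_left (abs_le.2 ⟨by linarith, by linarith⟩) (abs_nonneg _)
  have h4 : |t - t ^ 2| ^ 3 ≤ (|t| * (5 / 4)) ^ 3 := by gcongr
  have h5 : |t| ^ 3 ≤ t ^ 2 * (1 / 4) := by
    rw [pow_succ, sq_abs]; gcongr
  have h6 : -(t ^ 3) ≤ t ^ 2 * (1 / 4) := by nlinarith [sq_nonneg t]
  have h7 : t ^ 4 ≤ t ^ 2 * (1 / 16) := by nlinarith [sq_nonneg t]
  nlinarith [sq_nonneg t]

/-- The cosine of frequency `k` is an explicit continuous coboundary over a rotation by `ω` as soon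
as `sin (π k ω) ≠ 0`. -/
lemma sin_coboundary (ω k θ : ℝ) (hs : sin (π * k * ω) ≠ 0) :
    sin (2 * π * k * (θ + ω - ω / 2)) / (2 * sin (π * k * ω))
      - sin (2 * π * k * (θ - ω / 2)) / (2 * sin (π * k * ω)) = cos (2 * π * k * θ) := by
  rw [← sub_div, div_eq_iff (by simpa using hs),
    show 2 * π * k * (θ + ω - ω / 2) = 2 * π * k * θ + π * k * ω by ring,
    show 2 * π * k * (θ - ω / 2) = 2 * π * k * θ - π * k * ω by ring, sin_add, sin_sub]
  ring

lemma sin_pi_mul_ne_zero_of_irrational {x : ℝ} (hx : Irrational x) : sin (π * x) ≠ 0 := by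
  rw [Real.sin_ne_zero_iff]
  intro n hn
  refine (irrational_iff_ne_rational x).1 hx n 1 one_ne_zero ?_
  have : π * (n - x) = 0 := by linarith
  rcases mul_eq_zero.1 this with h | h
  · exact absurd h pi_ne_zero
  · push_cast; linarith

/-- A bounded continuous periodic `ψ` whose increment along the rotation stays uniformly below
`log a`, where `a θ = μ + λ cos (2πθ)`. -/
lemma exists_subcocycle {ω μ lam : ℝ} (hω : Irrational ω) (hl : |lam| ≤ 1 / 4)
    (h2 : 1 + lam ^ 2 / 2 < μ) :
    ∃ ψ : ℝ → ℝ, ∃ B q : ℝ, Continuous ψ ∧ Function.Periodic ψ 1 ∧ (∀ θ, |ψ θ| ≤ B) ∧ q < 1 ∧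
      ∀ θ, exp (ψ (θ + ω) - ψ θ) ≤ q * (μ + lam * cos (2 * π * θ)) := by
  have hμ1 : 1 < μ := by nlinarith [sq_nonneg lam]
  have hμ : 0 < μ := by linarith
  have hs1 : sin (π * 1 * ω) ≠ 0 := by rw [mul_one]; exact sin_pi_mul_ne_zero_of_irrational hω
  have hs2 : sin (π * 2 * ω) ≠ 0 := by
    rw [mul_assoc]
    refine sin_pi_mul_ne_zero_of_irrational ?_
    simpa using hω.natCast_mul (m := 2) (by norm_num)
  set r := lam / μ with hr
  let S : ℝ → ℝ → ℝ := fun k θ => sin (2 * π * k * (θ - ω / 2)) / (2 * sin (π * k * ω))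
  have hSb : ∀ k θ, |S k θ| ≤ 1 / |2 * sin (π * k * ω)| := by
    intro k θ
    simp only [S, abs_div]
    gcongr
    exact abs_sin_le_one _
  refine ⟨fun θ => r * S 1 θ - r ^ 2 / 2 * S 2 θ,
    |r| * (1 / |2 * sin (π * 1 * ω)|) + |r ^ 2 / 2| * (1 / |2 * sin (π * 2 * ω)|),
    exp (r ^ 2 / 2) / μ, ?_, ?_, ?_, ?_, ?_⟩
  · simp only [S]; fun_prop
  · intro θ
    simp only [S]
    rw [show 2 * π * 1 * (θ + 1 - ω / 2) = 2 * π * 1 * (θ - ω / 2) + 2 * π by ring,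
      show 2 * π * 2 * (θ + 1 - ω / 2) = 2 * π * 2 * (θ - ω / 2) + 2 * π + 2 * π by ring]
    simp only [sin_add_two_pi]
  · intro θ
    refine (abs_sub _ _).trans ?_
    rw [abs_mul, abs_mul]
    gcongr <;> exact hSb _ _
  · rw [div_lt_one hμ, ← Real.lt_log_iff_exp_lt hμ]
    have hlog : 1 - μ⁻¹ ≤ log μ := Real.one_sub_inv_le_log_of_pos hμ
    refine lt_of_lt_of_le ?_ hlog
    have : 1 - μ⁻¹ - r ^ 2 / 2 = (μ * (μ - 1) - lam ^ 2 / 2) / μ ^ 2 := by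
      rw [hr]; field_simp
    have h : 0 < (μ * (μ - 1) - lam ^ 2 / 2) / μ ^ 2 := by
      apply div_pos _ (by positivity)
      nlinarith
    linarith
  · intro θ
    have e1 := sin_coboundary ω 1 θ hs1
    have e2 := sin_coboundary ω 2 θ hs2
    set c := cos (2 * π * θ) with hc
    have e2c : cos (2 * π * 2 * θ) = 2 * c ^ 2 - 1 := by
      rw [show 2 * π * 2 * θ = 2 * (2 * π * θ) by ring, cos_two_mul]
    have e1c : cos (2 * π * 1 * θ) = c := by rw [mul_one]
    rw [e1c] at e1
    rw [e2c] at e2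
    have hinc : (r * S 1 (θ + ω) - r ^ 2 / 2 * S 2 (θ + ω)) - (r * S 1 θ - r ^ 2 / 2 * S 2 θ)
        = (r * c - (r * c) ^ 2) + r ^ 2 / 2 := by
      simp only [S]
      linear_combination r * e1 - r ^ 2 / 2 * e2
    have ht : |r * c| ≤ 1 / 4 := by
      rw [abs_mul, hr, abs_div, abs_of_pos hμ]
      have : |lam| / μ ≤ 1 / 4 := by
        rw [div_le_iff₀ hμ]; linarith
      calc |lam| / μ * |c| ≤ 1 / 4 * 1 := by gcongr; exact abs_cos_le_one _
        _ = 1 / 4 := by norm_num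
    have ha : μ + lam * c = μ * (1 + r * c) := by
      rw [hr]; field_simp
    beta_reduce
    rw [hinc, exp_add, ha, show exp (r ^ 2 / 2) / μ * (μ * (1 + r * c))
      = (1 + r * c) * exp (r ^ 2 / 2) by field_simp]
    gcongr
    exact exp_sub_sq_le ht

/-- In logarithmic coordinates the fibre map `x ↦ x (a - x²)` is a contraction on the part of its
region of monotonicity that is bounded away from `0`. -/
lemma log_fibre_lipschitz {a A m L : ℝ} (haA : a ≤ A) (hL : 3 * exp (2 * L) ≤ a) {y z : ℝ}
    (hy : y ∈ Set.Icc m L) (hz : z ∈ Set.Icc m L) :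
    |(y + log (a - exp (2 * y))) - (z + log (a - exp (2 * z)))|
      ≤ (1 - 2 * exp (2 * m) / A) * |y - z| := by
  have key : ∀ x ∈ Set.Icc m L, 3 * exp (2 * x) ≤ a := fun x hx => by
    have : exp (2 * x) ≤ exp (2 * L) := by gcongr; exact hx.2
    linarith
  have hd : ∀ x ∈ Set.Icc m L, HasDerivWithinAt (fun y => y + log (a - exp (2 * y)))
      (1 + (-(exp (2 * x) * 2)) / (a - exp (2 * x))) (Set.Icc m L) x := by
    intro x hx
    have hpos : a - exp (2 * x) ≠ 0 := by
      have := key x hx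
      have := exp_pos (2 * x)
      apply ne_of_gt; linarith
    have h1 : HasDerivAt (fun y : ℝ => exp (2 * y)) (exp (2 * x) * 2) x := by
      have := ((hasDerivAt_id x).const_mul 2).exp
      simpa using this
    exact ((hasDerivAt_id x).add ((h1.const_sub a).log hpos)).hasDerivWithinAt
  have hb : ∀ x ∈ Set.Icc m L,
      ‖1 + (-(exp (2 * x) * 2)) / (a - exp (2 * x))‖ ≤ 1 - 2 * exp (2 * m) / A := by
    intro x hx
    have h3 := key x hx
    have he := exp_pos (2 * x)
    have hpos : 0 < a - exp (2 * x) := by linarith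
    have hmx : exp (2 * m) ≤ exp (2 * x) := by gcongr; exact hx.1
    have hle1 : exp (2 * x) * 2 / (a - exp (2 * x)) ≤ 1 := by
      rw [div_le_one hpos]; linarith
    have hge : 2 * exp (2 * m) / A ≤ exp (2 * x) * 2 / (a - exp (2 * x)) := by
      apply div_le_div₀ <;> linarith
    rw [neg_div, Real.norm_eq_abs, abs_of_nonneg (by linarith)]
    linarith
  have := (convex_Icc m L).norm_image_sub_le_of_norm_hasDerivWithin_le hd hb hz hy
  simpa [Real.norm_eq_abs] using this

/-- Existence of a positive continuous invariant curve for `x ↦ x (a θ - x²)` over a rotation,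
given that the fibre maps are increasing on `[0, √(A - 1)]` and that the cocycle `a` dominates a
multiplicative coboundary by a factor greater than one. -/
lemma exists_invariant_curve {ω a₀ A q B : ℝ} {a ψ : ℝ → ℝ} (hac : Continuous a)
    (hap : Function.Periodic a 1) (ha0 : 0 < a₀) (hlo : ∀ θ, a₀ ≤ a θ) (hup : ∀ θ, a θ ≤ A)
    (hA : 1 < A) (h3 : 3 * (A - 1) ≤ a₀) (hψc : Continuous ψ) (hψp : Function.Periodic ψ 1)
    (hψB : ∀ θ, |ψ θ| ≤ B) (hq : q < 1)
    (hψ : ∀ θ, exp (ψ (θ + ω) - ψ θ) ≤ q * a θ) :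
    ∃ u : ℝ → ℝ, Continuous u ∧ Function.Periodic u 1 ∧ (∃ θ, u θ ≠ 0) ∧
      ∀ θ, u (θ + ω) = u θ * (a θ - u θ ^ 2) := by
  -- `L = log X` is the upper barrier and `p = e + ψ` the lower one, in logarithmic coordinates.
  set L := log (A - 1) / 2 with hLdef
  have hL : exp (2 * L) = A - 1 := by
    rw [hLdef, mul_div_cancel₀ _ two_ne_zero, exp_log (by linarith)]
  set e := min (L - B) (log (a₀ * (1 - q)) / 2 - B) with he
  set p : ℝ → ℝ := fun θ => e + ψ θ with hp
  set m := e - B with hm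
  have hmp : ∀ θ, m ≤ p θ := fun θ => by
    have := (abs_le.1 (hψB θ)).1
    simp only [hp, hm]; linarith
  have hpL : ∀ θ, p θ ≤ L := fun θ => by
    have := (abs_le.1 (hψB θ)).2
    have := min_le_left (L - B) (log (a₀ * (1 - q)) / 2 - B)
    simp only [hp]; linarith
  have hmL : m ≤ L := (hmp 0).trans (hpL 0)
  have hpsmall : ∀ θ, exp (2 * p θ) ≤ a₀ * (1 - q) := fun θ => by
    have := (abs_le.1 (hψB θ)).2
    have := min_le_right (L - B) (log (a₀ * (1 - q)) / 2 - B)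
    rw [← Real.le_log_iff_exp_le (mul_pos ha0 (by linarith))]
    simp only [hp]; linarith
  have hpc : Continuous p := by simp only [hp]; fun_prop
  have hpp : Function.Periodic p 1 := fun θ => by simp only [hp, hψp θ]
  have hposL : ∀ θ y, y ≤ L → 3 * exp (2 * y) ≤ a θ := fun θ y hy => by
    have h : exp (2 * y) ≤ exp (2 * L) := by gcongr
    have := hlo θ
    linarith
  have hpos : ∀ θ y, y ≤ L → 0 < a θ - exp (2 * y) := fun θ y hy => by
    have := hposL θ y hy
    have := exp_pos (2 * y)
    linarith
  have hsq : ∀ y : ℝ, exp (2 * y) = exp y ^ 2 := fun y => by rw [two_mul, exp_add, sq]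
  let φ : ℝ → ℝ → ℝ := fun θ y => y + log (a θ - exp (2 * y))
  have hexpφ : ∀ θ y, y ≤ L → exp (φ θ y) = exp y * (a θ - exp (2 * y)) := fun θ y hy => by
    simp only [φ]
    rw [exp_add, exp_log (hpos θ y hy)]
  have hmono : ∀ θ y z, y ≤ z → z ≤ L →
      exp y * (a θ - exp (2 * y)) ≤ exp z * (a θ - exp (2 * z)) := by
    intro θ y z hyz hzL
    have h1 := hposL θ z hzL
    have h2 : exp y ≤ exp z := by gcongr
    have h4 := exp_pos y
    rw [hsq] at h1 ⊢
    rw [hsq]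
    have h5 : 0 ≤ (exp z - exp y) * (a θ - exp z ^ 2 - exp z * exp y - exp y ^ 2) := by
      apply mul_nonneg (by linarith)
      nlinarith
    nlinarith
  have hφL : ∀ θ y, y ≤ L → φ θ y ≤ L := by
    intro θ y hy
    rw [← exp_le_exp, hexpφ θ y hy]
    refine (hmono θ y L hy le_rfl).trans ?_
    rw [hL]
    have := hup θ
    have := exp_pos L
    nlinarith
  have hφp : ∀ θ y, p θ ≤ y → y ≤ L → p (θ + ω) ≤ φ θ y := by
    intro θ y hpy hy
    rw [← exp_le_exp, hexpφ θ y hy]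
    refine le_trans ?_ (hmono θ (p θ) y hpy hy)
    have h1 : exp (p (θ + ω)) = exp (p θ) * exp (ψ (θ + ω) - ψ θ) := by
      rw [← exp_add]; congr 1; simp only [hp]; ring
    rw [h1]
    have h2 := hψ θ
    have h4 := hpsmall θ
    have h5 : a₀ * (1 - q) ≤ a θ * (1 - q) := by
      apply mul_le_mul_of_nonneg_right (hlo θ); linarith
    gcongr
    linarith
  -- Clamping to `[p θ, L]` makes the graph transform defined on all bounded continuous functions.
  let c : ℝ → ℝ → ℝ := fun θ y => max (p θ) (min y L)
  have hcp : ∀ θ y, p θ ≤ c θ y := fun θ y => le_max_left _ _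
  have hcL : ∀ θ y, c θ y ≤ L := fun θ y => max_le (hpL θ) (min_le_right _ _)
  have hclip : ∀ θ y z, |c θ y - c θ z| ≤ |y - z| := by
    intro θ y z
    have h1 : |c θ y - c θ z| ≤ |min y L - min z L| := by
      simp only [c]
      rw [max_comm (p θ), max_comm (p θ)]
      exact abs_max_sub_max_le_abs _ _ _
    refine h1.trans ?_
    have := abs_min_sub_min_le_max y L z L
    simpa using this
  have hcont : ∀ y : BoundedContinuousFunction ℝ ℝ,
      Continuous fun θ => φ (θ - ω) (c (θ - ω) (y (θ - ω))) := by
    intro y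
    have h1 : Continuous fun θ => φ θ (c θ (y θ)) := by
      have hcc : Continuous fun θ => c θ (y θ) :=
        hpc.max (y.continuous.min continuous_const)
      simp only [φ]
      refine hcc.add (Continuous.log (hac.sub ?_) fun θ => (hpos θ _ (hcL θ _)).ne')
      exact continuous_exp.comp (continuous_const.mul hcc)
    exact h1.comp (continuous_id.sub continuous_const)
  have hbd : ∀ (y : BoundedContinuousFunction ℝ ℝ) θ,
      ‖φ (θ - ω) (c (θ - ω) (y (θ - ω)))‖ ≤ max |m| |L| := by
    intro y θ
    have h1 := hφp (θ - ω) _ (hcp (θ - ω) (y (θ - ω))) (hcL _ _)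
    exact abs_le_max_abs_abs ((hmp _).trans h1) (hφL _ _ (hcL _ _))
  let Φ : BoundedContinuousFunction ℝ ℝ → BoundedContinuousFunction ℝ ℝ := fun y =>
    BoundedContinuousFunction.ofNormedAddCommGroup _ (hcont y) _ (hbd y)
  have hΦ : ∀ y θ, Φ y θ = φ (θ - ω) (c (θ - ω) (y (θ - ω))) := fun y θ => rfl
  have hκ0 : 0 ≤ 1 - 2 * exp (2 * m) / A := by
    have h1 := hposL 0 m hmL
    have h2 := hup 0
    have := exp_pos (2 * m)
    rw [sub_nonneg, div_le_one (by linarith)]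
    linarith
  have hκ1 : 1 - 2 * exp (2 * m) / A < 1 := by
    have : 0 < 2 * exp (2 * m) / A := by positivity
    linarith
  have hcontr : ContractingWith (NNReal.mk (1 - 2 * exp (2 * m) / A) hκ0) Φ := by
    refine ⟨NNReal.coe_lt_coe.1 hκ1, LipschitzWith.of_dist_le_mul fun y z => ?_⟩
    rw [BoundedContinuousFunction.dist_le (by positivity)]
    intro θ
    rw [hΦ, hΦ, Real.dist_eq]
    refine (log_fibre_lipschitz (hup (θ - ω)) (hposL _ L le_rfl)
      ⟨(hmp _).trans (hcp _ _), hcL _ _⟩ ⟨(hmp _).trans (hcp _ _), hcL _ _⟩).trans ?_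
    refine mul_le_mul_of_nonneg_left ?_ hκ0
    refine (hclip _ _ _).trans ?_
    rw [← Real.dist_eq]
    exact BoundedContinuousFunction.dist_coe_le_dist _
  set y := ContractingWith.fixedPoint Φ hcontr with hy
  have hfix : Φ y = y := hcontr.fixedPoint_isFixedPt
  have hfixθ : ∀ θ, y (θ + ω) = φ θ (c θ (y θ)) := fun θ => by
    conv_lhs => rw [← hfix]
    rw [hΦ, add_sub_cancel_right]
  -- The fixed point lies between the barriers, so clamping does not affect it.
  have hyp : ∀ θ, p θ ≤ y θ := fun θ => by
    have h1 := hfixθ (θ - ω)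
    have h2 := hφp (θ - ω) _ (hcp (θ - ω) (y (θ - ω))) (hcL _ _)
    rw [sub_add_cancel] at h1 h2
    rw [h1]; exact h2
  have hyL : ∀ θ, y θ ≤ L := fun θ => by
    have h1 := hfixθ (θ - ω)
    rw [sub_add_cancel] at h1
    rw [h1]; exact hφL _ _ (hcL _ _)
  have hcy : ∀ θ, c θ (y θ) = y θ := fun θ => by
    simp only [c]
    rw [min_eq_left (hyL θ), max_eq_right (hyp θ)]
  -- The translate of the fixed point by `1` is again a fixed point.
  have hper : Function.Periodic y 1 := by
    let y' : BoundedContinuousFunction ℝ ℝ :=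
      y.compContinuous ⟨fun θ => θ + 1, by fun_prop⟩
    have hy' : ∀ θ, y' θ = y (θ + 1) := fun θ => rfl
    have hf' : Φ y' = y' := by
      ext θ
      rw [hΦ, hy', hy', show θ + 1 = (θ - ω + 1) + ω by ring, hfixθ]
      simp only [φ, c, hap (θ - ω), hpp (θ - ω)]
    have h := hcontr.fixedPoint_unique hf'
    intro θ
    rw [← hy', h]
  refine ⟨fun θ => exp (y θ), continuous_exp.comp y.continuous, fun θ => ?_, ⟨0, exp_ne_zero _⟩,
    fun θ => ?_⟩
  · simp only [hper θ]
  · simp only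
    rw [hfixθ, hcy, hexpφ θ _ (hyL θ), hsq]

/-- (First item of Proposition `existence of period doubling`.)
For irrational `ω` and parameters with `0 < |λ| < μ` and `1 + λ²/2 < μ < 3/2 - 2|λ|`,
the model map `G(θ,x) = (θ+ω, x(x² - (μ + λ cos 2πθ)))` has a two-periodic continuous
non-trivial invariant curve: there is a continuous `1`-periodic `u : ℝ → ℝ`
(modelling `u : ℝ/ℤ → ℝ`), not identically zero, with
`u(θ+ω) = -u(θ)(u(θ)² - (μ + λ cos 2πθ))` for all `θ` — so the graphs of `u` and `-u`
form a set invariant under `G²` but not under `G`. -/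
theorem stmt15 (ω : ℝ) (hω : Irrational ω) (μ lam : ℝ)
    (h0 : 0 < |lam|) (h1 : |lam| < μ)
    (h2 : 1 + lam ^ 2 / 2 < μ) (h3 : μ < 3 / 2 - 2 * |lam|) :
    ∃ u : ℝ → ℝ, Continuous u ∧ Function.Periodic u 1 ∧ (∃ θ, u θ ≠ 0) ∧
      ∀ θ, u (θ + ω) = -(u θ * (u θ ^ 2 - (μ + lam * Real.cos (2 * Real.pi * θ)))) := by
  have hl : |lam| ≤ 1 / 4 := by nlinarith [sq_abs lam]
  obtain ⟨ψ, B, q, hψc, hψp, hψB, hq, hψ⟩ := exists_subcocycle hω hl h2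
  have hcos : ∀ θ, |lam * cos (2 * π * θ)| ≤ |lam| := fun θ => by
    rw [abs_mul]
    exact mul_le_of_le_one_right (abs_nonneg _) (abs_cos_le_one _)
  obtain ⟨u, huc, hup, hu0, hu⟩ := exists_invariant_curve (ω := ω) (a₀ := μ - |lam|)
    (A := μ + |lam|) (a := fun θ => μ + lam * cos (2 * π * θ)) (by fun_prop)
    (fun θ => by
      simp only
      rw [show 2 * π * (θ + 1) = 2 * π * θ + 2 * π by ring, cos_add_two_pi])
    (by linarith) (fun θ => by linarith [(abs_le.1 (hcos θ)).1])
    (fun θ => by linarith [(abs_le.1 (hcos θ)).2]) (by nlinarith [sq_nonneg lam])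
    (by linarith) hψc hψp hψB hq hψ
  refine ⟨u, huc, hup, hu0, fun θ => ?_⟩
  rw [hu θ]
  ring
end

section
/- Let μ, λ ∈ ℝ with 0 ≤ |λ| < μ and μ + 2|λ| < 3/2, and set β = √((μ − |λ|)/3) and h(θ,x) = −x(x² − (μ + λ cos(2πθ))). Then there exists δ ∈ (0,β) such that, with I = [−β + δ, β − δ]: (a) for every θ ∈ ℝ/ℤ and every x ∈ I, h(θ,x) ∈ I, i.e. the cylinder (ℝ/ℤ)×I is invariant under (θ,x) ↦ (θ+ω, h(θ,x)); and (b) for every θ ∈ ℝ/ℤ and every x ∈ I, ∂_x h(θ,x) = −3x² + μ + λ cos(2πθ) > 0, i.e. h(θ,·) is strictly increasing on I. -/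
/-!
Write `a = μ + λ cos 2πθ`, so that `3β² = μ - |λ| ≤ a ≤ μ + |λ|`, and `b = β - δ` for the
half-width of `I`. On `[-b, b]` with `0 < b < β` the odd map `x ↦ x (a - x²)` is strictly
increasing, because `x² + xy + y² ≤ 3b² < 3β² ≤ a` (`cubic_strictMonoOn`). Hence `[-b, b]` is
invariant as soon as the endpoint satisfies `b (a - b²) ≤ b`, that is `a - 1 ≤ b²`
(`cubic_mapsTo`). Since `a ≤ μ + |λ|`, it is enough that `μ + |λ| - 1 ≤ b² < β²`, and the
hypothesis `μ + 2|λ| < 3/2` says precisely that `μ + |λ| - 1 < β²`.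
-/

theorem cubic_strictMonoOn {a b : ℝ} (hab : 3 * b ^ 2 < a) :
    StrictMonoOn (fun x : ℝ => -(x * (x ^ 2 - a))) (Set.Icc (-b) b) := by
  rintro x ⟨hx1, hx2⟩ y ⟨hy1, hy2⟩ hxy
  have hx : x ^ 2 ≤ b ^ 2 := sq_le_sq' hx1 hx2
  have hy : y ^ 2 ≤ b ^ 2 := sq_le_sq' hy1 hy2
  have hpos : 0 < a - (x ^ 2 + x * y + y ^ 2) := by nlinarith [sq_nonneg (x - y)]
  have := mul_pos (sub_pos.2 hxy) hpos
  simp only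
  linarith

theorem cubic_mapsTo {a b x : ℝ} (hb : 0 ≤ b) (hab : 3 * b ^ 2 < a) (ha : a - 1 ≤ b ^ 2)
    (hx : x ∈ Set.Icc (-b) b) : -(x * (x ^ 2 - a)) ∈ Set.Icc (-b) b := by
  have hm := (cubic_strictMonoOn hab).monotoneOn
  have hu := hm hx ⟨by linarith, le_rfl⟩ hx.2
  have hl := hm ⟨le_rfl, by linarith⟩ hx hx.1
  have hbb : 0 ≤ b * (b ^ 2 - (a - 1)) := mul_nonneg hb (sub_nonneg.2 ha)
  simp only at hu hl
  constructor <;> linarith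

/-- For `0 ≤ |λ| < μ` and `μ + 2|λ| < 3/2`, setting
`β = √((μ - |λ|)/3)` and `h(θ,x) = -x(x² - (μ + λ cos 2πθ))`, there exists
`δ ∈ (0,β)` such that with `I = [-β+δ, β-δ]`:
(a) every fiber map `h(θ,·)` maps `I` into `I` (so the cylinder `(ℝ/ℤ) × I` is
invariant under `(θ,x) ↦ (θ+ω, h(θ,x))`); and
(b) on `I` one has `∂ₓh(θ,x) = -3x² + μ + λ cos 2πθ > 0`, so `h(θ,·)` is strictly
increasing on `I`. -/
theorem stmt17 (ω μ lam : ℝ) (h0 : 0 ≤ |lam|) (h1 : |lam| < μ)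
    (h2 : μ + 2 * |lam| < 3 / 2) :
    ∃ δ : ℝ, 0 < δ ∧ δ < Real.sqrt ((μ - |lam|) / 3) ∧
      (∀ θ x : ℝ,
        x ∈ Set.Icc (-Real.sqrt ((μ - |lam|) / 3) + δ) (Real.sqrt ((μ - |lam|) / 3) - δ) →
          -(x * (x ^ 2 - (μ + lam * Real.cos (2 * Real.pi * θ)))) ∈
            Set.Icc (-Real.sqrt ((μ - |lam|) / 3) + δ) (Real.sqrt ((μ - |lam|) / 3) - δ)) ∧
      (∀ θ x : ℝ,
        x ∈ Set.Icc (-Real.sqrt ((μ - |lam|) / 3) + δ) (Real.sqrt ((μ - |lam|) / 3) - δ) →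
          deriv (fun y => -(y * (y ^ 2 - (μ + lam * Real.cos (2 * Real.pi * θ))))) x =
              -3 * x ^ 2 + μ + lam * Real.cos (2 * Real.pi * θ) ∧
            0 < -3 * x ^ 2 + μ + lam * Real.cos (2 * Real.pi * θ)) ∧
      (∀ θ : ℝ,
        StrictMonoOn (fun x => -(x * (x ^ 2 - (μ + lam * Real.cos (2 * Real.pi * θ)))))
          (Set.Icc (-Real.sqrt ((μ - |lam|) / 3) + δ) (Real.sqrt ((μ - |lam|) / 3) - δ))) := by
  have ha : ∀ θ : ℝ, μ - |lam| ≤ μ + lam * Real.cos (2 * Real.pi * θ) ∧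
      μ + lam * Real.cos (2 * Real.pi * θ) ≤ μ + |lam| := by
    intro θ
    have h : |lam * Real.cos (2 * Real.pi * θ)| ≤ |lam| := by
      rw [abs_mul]
      exact mul_le_of_le_one_right h0 (Real.abs_cos_le_one _)
    have := abs_le.1 h
    constructor <;> linarith
  have hβ : Real.sqrt ((μ - |lam|) / 3) ^ 2 = (μ - |lam|) / 3 := Real.sq_sqrt (by linarith)
  have hβ0 : 0 < Real.sqrt ((μ - |lam|) / 3) := Real.sqrt_pos.2 (by linarith)
  set β := Real.sqrt ((μ - |lam|) / 3)
  -- `b = √c` is the half-width of the interval, for any `c` with `max 0 (μ + |λ| - 1) < c < β²`.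
  obtain ⟨c, hc1, hc2⟩ : ∃ c, max 0 (μ + |lam| - 1) < c ∧ c < β ^ 2 :=
    exists_between (max_lt (by positivity) (by rw [hβ]; linarith))
  have hc0 : 0 < c := (le_max_left _ _).trans_lt hc1
  have hc3 : μ + |lam| - 1 < c := (le_max_right _ _).trans_lt hc1
  obtain ⟨b, hb0, rfl⟩ : ∃ b : ℝ, 0 < b ∧ b ^ 2 = c :=
    ⟨Real.sqrt c, Real.sqrt_pos.2 hc0, Real.sq_sqrt hc0.le⟩
  have hbβ : b < β := lt_of_pow_lt_pow_left₀ 2 hβ0.le hc2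
  have hab : ∀ θ : ℝ, 3 * b ^ 2 < μ + lam * Real.cos (2 * Real.pi * θ) := fun θ => by
    linarith [(ha θ).1]
  refine ⟨β - b, by linarith, by linarith, ?_⟩
  rw [show -β + (β - b) = -b by ring, show β - (β - b) = b by ring]
  refine ⟨fun θ x hx => cubic_mapsTo hb0.le (hab θ) (by linarith [(ha θ).2]) hx,
    fun θ x hx => ⟨?_, ?_⟩, fun θ => cubic_strictMonoOn (hab θ)⟩
  · have hd := ((hasDerivAt_id x).mul
      (((hasDerivAt_id x).pow 2).sub_const (μ + lam * Real.cos (2 * Real.pi * θ)))).neg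
    refine (HasDerivAt.congr_deriv hd ?_).deriv
    simp
    ring
  · have : x ^ 2 ≤ b ^ 2 := sq_le_sq' hx.1 hx.2
    linarith [hab θ]
end
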